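/- Let 0 < d < n and let Ω ⊂ ℝⁿ be a weak local John domain whose complement ℝⁿ∖Ω is unbounded. Let s > 0, 1 ≤ p < ∞, 1 ≤ β < ∞, and 0 < c < 1. Then C_c^∞(Ω) is dense in W̃^{1,p}_{av,c,β,s}(Ω): for every u ∈ W̃^{1,p}_{av,c,β,s}(Ω) and every ε > 0 there is φ ∈ C_c^∞(Ω) with ‖∇(u−φ)‖_{L^p_{av,c,β,s}(Ω)} + ‖u−φ‖_{L^p_{av,c,β,s+1}(Ω)} < ε. -/

import Mathlib

open MeasureTheory Metric Set Filter
open scoped ENNReal NNReal Topology RealInnerProductSpace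

noncomputable section

namespace Paper

/-- Euclidean space `ℝⁿ`. -/
abbrev Euc (n : ℕ) : Type := EuclideanSpace ℝ (Fin n)

variable {n : ℕ}

/-- `δ(x)`: the distance from `x` to the boundary of `Ω`. -/
def bd (Ω : Set (Euc n)) (x : Euc n) : ℝ := Metric.infDist x (frontier Ω)

/-- `σ`: the `d`-dimensional Hausdorff measure on `ℝⁿ`. -/
def hm (n : ℕ) (d : ℝ) : Measure (Euc n) := μH[d]

/-- `Γ ⊆ ℝⁿ` is `d`-Ahlfors regular with constant `A`:
`(1/A) rᵈ ≤ σ(B(ξ,r) ∩ Γ) ≤ A rᵈ` for all `ξ ∈ Γ` and `0 < r ≤ diam Γ`. -/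
def AhlforsRegular (d A : ℝ) (Γ : Set (Euc n)) : Prop :=
  Γ.Nonempty ∧ 0 < A ∧
    ∀ ξ ∈ Γ, ∀ r : ℝ, 0 < r → ENNReal.ofReal r ≤ EMetric.diam Γ →
      ENNReal.ofReal (r ^ d / A) ≤ hm n d (Metric.ball ξ r ∩ Γ) ∧
        hm n d (Metric.ball ξ r ∩ Γ) ≤ ENNReal.ofReal (A * r ^ d)

/-- A `λ`-carrot path from `x ∈ ∂Ω` to `y ∈ Ω`: a rectifiable curve, parameterized by
arc length (hence `1`-Lipschitz), from `x` to `y`, staying in `Ω ∪ {x}`, with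
`δ(ζ(t)) ≥ λ t`. -/
def IsCarrotPath (Ω : Set (Euc n)) (lam : ℝ) (x y : Euc n) : Prop :=
  ∃ (T : ℝ) (ζ : ℝ → Euc n), 0 ≤ T ∧ ζ 0 = x ∧ ζ T = y ∧
    LipschitzOnWith 1 ζ (Set.Icc 0 T) ∧
    (∀ t ∈ Set.Icc (0 : ℝ) T, ζ t ∈ Ω ∪ {x}) ∧
    (∀ t ∈ Set.Icc (0 : ℝ) T, lam * t ≤ bd Ω (ζ t))

/-- `y ∈ Ω` is a `(θ,λ,N)`-weak local John point. -/
def IsWLJPoint (Ω : Set (Euc n)) (d θ lam N : ℝ) (y : Euc n) : Prop :=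
  ∃ F : Set (Euc n), MeasurableSet F ∧
    F ⊆ Metric.ball y (N * bd Ω y) ∩ frontier Ω ∧
    ENNReal.ofReal θ * hm n d (Metric.ball y (N * bd Ω y) ∩ frontier Ω) ≤ hm n d F ∧
    ∀ x ∈ F, IsCarrotPath Ω lam x y

/-- The weak local John condition with specified parameters. -/
def WeakLocalJohnWith (Ω : Set (Euc n)) (d θ lam N : ℝ) : Prop :=
  0 < θ ∧ θ ≤ 1 ∧ 0 < lam ∧ lam ≤ 1 ∧ 2 ≤ N ∧ ∀ y ∈ Ω, IsWLJPoint Ω d θ lam N y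

/-- `Ω` is a weak local John domain. -/
def WeakLocalJohn (Ω : Set (Euc n)) (d : ℝ) : Prop :=
  ∃ θ lam N : ℝ, WeakLocalJohnWith Ω d θ lam N

/-- The interior corkscrew condition. -/
def InteriorCorkscrew (Ω : Set (Euc n)) : Prop :=
  ∃ ε : ℝ, 0 < ε ∧ ε < 1 ∧ ∀ x ∈ frontier Ω, ∀ r : ℝ, 0 < r →
    ENNReal.ofReal r < EMetric.diam Ω →
    ∃ z : Euc n, z ∈ Metric.ball x r ∧ Metric.ball z (ε * r) ⊆ Ω

/-- The Harnack chain condition. -/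
def HarnackChainCond (Ω : Set (Euc n)) : Prop :=
  ∃ (M m : ℝ) (Nf : ℝ → ℕ), 1 ≤ M ∧ 0 < m ∧ m < 1 ∧
    ∀ x ∈ Ω, ∀ y ∈ Ω,
      ∃ (N : ℕ) (c : Fin (N + 1) → Euc n) (r : Fin (N + 1) → ℝ),
        N ≤ Nf (dist x y / min (bd Ω x) (bd Ω y)) ∧
        x ∈ Metric.ball (c 0) (r 0) ∧ y ∈ Metric.ball (c (Fin.last N)) (r (Fin.last N)) ∧
        (∀ i : Fin N,
          (Metric.ball (c i.castSucc) (r i.castSucc) ∩ Metric.ball (c i.succ) (r i.succ)).Nonempty) ∧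
        ∀ i : Fin (N + 1), 0 < r i ∧ Metric.ball (c i) (r i) ⊆ Ω ∧
          m * (2 * r i) ≤ bd Ω (c i) - r i ∧ bd Ω (c i) - r i ≤ M * (2 * r i)

/-- The weighted ellipticity conditions
`λ δ(x)^{d+1-n} |ξ|² ≤ ξ·A(x)ξ` and `|η·A(x)ξ| ≤ Λ δ(x)^{d+1-n} |ξ||η|` on `Ω`. -/
def WeaklyElliptic (Ω : Set (Euc n)) (d lam Lam : ℝ)
    (A : Euc n → Euc n →L[ℝ] Euc n) : Prop :=
  0 < lam ∧ lam ≤ Lam ∧ (∀ v : Euc n, Measurable fun x => A x v) ∧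
    ∀ x ∈ Ω, ∀ ξ η : Euc n,
      lam * bd Ω x ^ (d + 1 - (n : ℝ)) * ‖ξ‖ ^ 2 ≤ ⟪ξ, A x ξ⟫ ∧
      |⟪η, A x ξ⟫| ≤ Lam * bd Ω x ^ (d + 1 - (n : ℝ)) * ‖ξ‖ * ‖η‖

/-- A test function on the open set `Ψ`: smooth, compactly supported, support inside `Ψ`. -/
def IsTestOn (Ψ : Set (Euc n)) (φ : Euc n → ℝ) : Prop :=
  ContDiff ℝ (⊤ : ℕ∞) φ ∧ HasCompactSupport φ ∧ tsupport φ ⊆ Ψ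

/-- `g` is the weak gradient of `u` on `Ψ`:
`∫_Ψ u ∂ᵥφ = −∫_Ψ ⟪g,v⟫ φ` for all test functions `φ` and directions `v`. -/
def HasWeakGradOn (u : Euc n → ℝ) (g : Euc n → Euc n) (Ψ : Set (Euc n)) : Prop :=
  LocallyIntegrableOn u Ψ volume ∧ LocallyIntegrableOn g Ψ volume ∧
    ∀ φ : Euc n → ℝ, IsTestOn Ψ φ → ∀ v : Euc n,
      (∫ x in Ψ, u x * fderiv ℝ φ x v) = -∫ x in Ψ, ⟪g x, v⟫ * φ x

/-- Weak formulation of `− div A ∇u = − div H` in `Ψ`, where `g` is the weak gradient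
of `u`. -/
def WeakSolOn (Ψ : Set (Euc n)) (A : Euc n → Euc n →L[ℝ] Euc n)
    (u : Euc n → ℝ) (g H : Euc n → Euc n) : Prop :=
  HasWeakGradOn u g Ψ ∧ LocallyIntegrableOn H Ψ volume ∧
    ∀ φ : Euc n → ℝ, IsTestOn Ψ φ →
      (∫ x in Ψ, ⟪gradient φ x, A x (g x)⟫) = ∫ x in Ψ, ⟪gradient φ x, H x⟫

/-- `Tr u(ξ) = 0` in the averaged sense: `r^{-n} ∫_{B(ξ,r)∩Ω} |u| → 0` as `r → 0⁺`. -/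
def TrZeroAt (Ω : Set (Euc n)) (u : Euc n → ℝ) (ξ : Euc n) : Prop :=
  Tendsto (fun r : ℝ => (1 / r ^ n) * ∫ x in Metric.ball ξ r ∩ Ω, |u x|)
    (𝓝[>] 0) (𝓝 0)

/-- The Whitney average `W_{c,β} f (y) = (⨍_{B(y, c δ(y))} |f|^β)^{1/β}`
(essential supremum if `β = ∞`), as an extended nonnegative real. -/
def wAvg (Ω : Set (Euc n)) (c : ℝ) (β : ℝ≥0∞) {F : Type*} [NormedAddCommGroup F]
    (f : Euc n → F) (y : Euc n) : ℝ≥0∞ :=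
  eLpNorm f β
    ((volume (Metric.ball y (c * bd Ω y)))⁻¹ • volume.restrict (Metric.ball y (c * bd Ω y)))

/-- The weighted averaged norm `‖f‖_{L^p_{av,c,β,s}(Ψ;Ω)}`:
`(∫_Ψ (W_{c,β}f)^p δ^{d-n+p-ps})^{1/p}`, `sup_Ψ (W_{c,β}f) δ^{1-s}` if `p = ∞`. -/
def avNormOn (Ω Ψ : Set (Euc n)) (d c : ℝ) (β p : ℝ≥0∞) (s : ℝ)
    {F : Type*} [NormedAddCommGroup F] (f : Euc n → F) : ℝ≥0∞ :=
  if p = ⊤ then ⨆ y ∈ Ψ, wAvg Ω c β f y * ENNReal.ofReal (bd Ω y) ^ (1 - s)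
  else (∫⁻ y in Ψ, wAvg Ω c β f y ^ p.toReal *
      ENNReal.ofReal (bd Ω y) ^ (d - n + p.toReal - p.toReal * s)) ^ (1 / p.toReal)

/-- The weighted averaged norm `‖f‖_{L^p_{av,c,β,s}(Ω)}`. -/
def avNorm (Ω : Set (Euc n)) (d c : ℝ) (β p : ℝ≥0∞) (s : ℝ)
    {F : Type*} [NormedAddCommGroup F] (f : Euc n → F) : ℝ≥0∞ :=
  avNormOn Ω Ω d c β p s f

/-- `f ∈ L^β_loc(Ω)`. -/
def MemLLoc (Ω : Set (Euc n)) (β : ℝ≥0∞) {F : Type*} [NormedAddCommGroup F]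
    (f : Euc n → F) : Prop :=
  AEStronglyMeasurable f (volume.restrict Ω) ∧
    ∀ K : Set (Euc n), K ⊆ Ω → IsCompact K → eLpNorm f β (volume.restrict K) < ⊤

/-- The nontangential cone `γ_a(ξ) = {x ∈ Ω : |x − ξ| < (1+a) δ(x)}`. -/
def ntCone (Ω : Set (Euc n)) (a : ℝ) (ξ : Euc n) : Set (Euc n) :=
  {x | x ∈ Ω ∧ dist x ξ < (1 + a) * bd Ω x}

/-- The nontangential maximal function `N_a f (ξ) = esssup_{γ_a(ξ)} |f|`. -/
def ntMax (Ω : Set (Euc n)) (a : ℝ) {F : Type*} [NormedAddCommGroup F]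
    (f : Euc n → F) (ξ : Euc n) : ℝ≥0∞ :=
  essSup (fun x => (‖f x‖₊ : ℝ≥0∞)) (volume.restrict (ntCone Ω a ξ))

/-- The `L^q` norm of an `ℝ≥0∞`-valued function. -/
def lqNormE (q : ℝ≥0∞) {α : Type*} [MeasurableSpace α] (μ : Measure α)
    (f : α → ℝ≥0∞) : ℝ≥0∞ :=
  if q = ⊤ then essSup f μ else (∫⁻ x, f x ^ q.toReal ∂μ) ^ (1 / q.toReal)

/-- `Tr_{a,c} u (x) = U`: `x` is in the closure of its nontangential cone, and the
Whitney averages of `|u − U|` tend to `0` nontangentially. -/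
def HasNTTrace (Ω : Set (Euc n)) (a c : ℝ) (u : Euc n → ℝ) (x : Euc n) (U : ℝ) : Prop :=
  x ∈ closure (ntCone Ω a x) ∧
    Tendsto (fun y => wAvg Ω c 1 (fun z => u z - U) y) (𝓝[ntCone Ω a x] x) (𝓝 0)


theorem bd_eq_infDist_compl {Ω : Set (Euc n)} (hΩ : IsOpen Ω) (hne : (frontier Ω).Nonempty)
    {x : Euc n} (hx : x ∈ Ω) : bd Ω x = infDist x Ωᶜ := by
  have hfr : frontier Ω ⊆ Ωᶜ := hΩ.frontier_eq ▸ fun y hy => hy.2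
  apply le_antisymm
  · obtain ⟨y, hy, hxy⟩ := exists_mem_frontier_infDist_compl_eq_dist hx
      (fun h => by simp [h] at hne)
    rw [hxy]
    exact infDist_le_dist_of_mem hy
  · exact infDist_le_infDist_of_subset hfr hne

theorem bd_pos {Ω : Set (Euc n)} (hΩ : IsOpen Ω) (hne : (frontier Ω).Nonempty)
    {x : Euc n} (hx : x ∈ Ω) : 0 < bd Ω x := by
  refine (isClosed_frontier.notMem_iff_infDist_pos hne).1 fun h => ?_
  rw [hΩ.frontier_eq] at h
  exact h.2 hx

theorem bd_sub_le (Ω : Set (Euc n)) (x y : Euc n) : bd Ω x ≤ bd Ω y + dist x y :=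
  infDist_le_infDist_add_dist

theorem ball_bd_subset {Ω : Set (Euc n)} (hΩ : IsOpen Ω) (hne : (frontier Ω).Nonempty)
    {c : ℝ} (hc1 : c < 1) {x : Euc n} (hx : x ∈ Ω) : ball x (c * bd Ω x) ⊆ Ω := by
  have h : ball x (c * bd Ω x) ⊆ ball x (infDist x Ωᶜ) := by
    rw [← bd_eq_infDist_compl hΩ hne hx]
    exact ball_subset_ball (by nlinarith [bd_pos hΩ hne hx])
  exact h.trans ball_infDist_compl_subset

section Average

variable {F : Type*} [NormedAddCommGroup F] {Ω : Set (Euc n)} {c : ℝ} {q : ℝ≥0∞}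

theorem wAvg_congr_on_ball {f f' : Euc n → F} {y : Euc n}
    (h : ∀ x ∈ ball y (c * bd Ω y), f x = f' x) : wAvg Ω c q f y = wAvg Ω c q f' y := by
  refine eLpNorm_congr_ae (Measure.ae_smul_measure ?_ _)
  filter_upwards [ae_restrict_mem measurableSet_ball] with x hx using h x hx

theorem wAvg_eq_zero {f : Euc n → F} {y : Euc n}
    (h : ∀ x ∈ ball y (c * bd Ω y), f x = 0) : wAvg Ω c q f y = 0 := by
  rw [wAvg_congr_on_ball (f' := fun _ => 0) h]
  simp [wAvg]

theorem wAvg_mono_on_ball {F' : Type*} [NormedAddCommGroup F'] {f : Euc n → F} {f' : Euc n → F'}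
    {y : Euc n} (h : ∀ x ∈ ball y (c * bd Ω y), ‖f x‖ ≤ ‖f' x‖) :
    wAvg Ω c q f y ≤ wAvg Ω c q f' y := by
  refine eLpNorm_mono_ae (Measure.ae_smul_measure ?_ _)
  filter_upwards [ae_restrict_mem measurableSet_ball] with x hx using h x hx

theorem aestronglyMeasurable_avg {f : Euc n → F} (hf : AEStronglyMeasurable f (volume.restrict Ω))
    {y : Euc n} (hy : ball y (c * bd Ω y) ⊆ Ω) :
    AEStronglyMeasurable f
      ((volume (ball y (c * bd Ω y)))⁻¹ • volume.restrict (ball y (c * bd Ω y))) :=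
  (hf.mono_measure (Measure.restrict_mono hy le_rfl)).smul_measure _

theorem wAvg_add_le (hq : 1 ≤ q) {f f' : Euc n → F}
    (hf : AEStronglyMeasurable f (volume.restrict Ω))
    (hf' : AEStronglyMeasurable f' (volume.restrict Ω)) {y : Euc n}
    (hy : ball y (c * bd Ω y) ⊆ Ω) :
    wAvg Ω c q (fun x => f x + f' x) y ≤ wAvg Ω c q f y + wAvg Ω c q f' y :=
  eLpNorm_add_le (aestronglyMeasurable_avg hf hy) (aestronglyMeasurable_avg hf' hy) hq

theorem continuous_bd (Ω : Set (Euc n)) : Continuous (bd Ω) :=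
  continuous_infDist_pt _

theorem measurable_setLIntegral_ball_bd (Ω : Set (Euc n)) (c : ℝ) {k : Euc n → ℝ≥0∞}
    (hk : Measurable k) : Measurable fun y => ∫⁻ x in ball y (c * bd Ω y), k x := by
  have hopen : IsOpen {z : Euc n × Euc n | dist z.2 z.1 < c * bd Ω z.1} :=
    isOpen_lt (by fun_prop) (((continuous_bd Ω).comp continuous_fst).const_mul c)
  have h : Measurable fun y => ∫⁻ x,
      {z : Euc n × Euc n | dist z.2 z.1 < c * bd Ω z.1}.indicator (fun z => k z.2) (y, x) :=
    ((hk.comp measurable_snd).indicator hopen.measurableSet).lintegral_prod_right'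
  convert h using 2 with y
  rw [← lintegral_indicator measurableSet_ball]
  rfl

theorem measurable_wAvg (hq0 : q ≠ 0) (hq : q ≠ ⊤) {f : Euc n → F} (hf : Measurable fun x => ‖f x‖ₑ) :
    Measurable (wAvg Ω c q f) := by
  have h : wAvg Ω c q f = fun y => ((∫⁻ x in ball y (c * bd Ω y), 1)⁻¹ *
      ∫⁻ x in ball y (c * bd Ω y), ‖f x‖ₑ ^ q.toReal) ^ (1 / q.toReal) := by
    funext y
    simp [wAvg, eLpNorm_eq_lintegral_rpow_enorm_toReal hq0 hq]
  rw [h]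
  exact (((measurable_setLIntegral_ball_bd Ω c measurable_const).inv.mul
    (measurable_setLIntegral_ball_bd Ω c (hf.pow_const _)))).pow_const _

theorem aemeasurable_wAvg (hΩ : IsOpen Ω) (hne : (frontier Ω).Nonempty) (hc1 : c < 1)
    (hq0 : q ≠ 0) (hq : q ≠ ⊤) {f : Euc n → F}
    (hf : AEStronglyMeasurable f (volume.restrict Ω)) :
    AEMeasurable (wAvg Ω c q f) (volume.restrict Ω) := by
  refine ⟨wAvg Ω c q (hf.mk f), ?_, ?_⟩
  · exact measurable_wAvg hq0 hq hf.stronglyMeasurable_mk.enorm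
  · filter_upwards [ae_restrict_mem hΩ.measurableSet] with y hy
    refine eLpNorm_congr_ae (Measure.ae_smul_measure ?_ _)
    exact ae_restrict_of_ae_restrict_of_subset (ball_bd_subset hΩ hne hc1 hy) hf.ae_eq_mk

/-- The weighted measure `δ^{d-n+p-ps} dy` on `Ω`. -/
def avMeasure (Ω : Set (Euc n)) (d p s : ℝ) : Measure (Euc n) :=
  (volume.restrict Ω).withDensity fun y => ENNReal.ofReal (bd Ω y) ^ (d - n + p - p * s)

theorem measurable_ofReal_bd_rpow (Ω : Set (Euc n)) (e : ℝ) :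
    Measurable fun y => ENNReal.ofReal (bd Ω y) ^ e :=
  (continuous_bd Ω).measurable.ennreal_ofReal.pow_const _

theorem ofReal_bd_rpow_ne {x : Euc n} (hΩ : IsOpen Ω) (hne : (frontier Ω).Nonempty) (hx : x ∈ Ω)
    (e : ℝ) : ENNReal.ofReal (bd Ω x) ^ e ≠ 0 ∧ ENNReal.ofReal (bd Ω x) ^ e ≠ ⊤ := by
  have := bd_pos hΩ hne hx
  constructor
  · simp [ENNReal.rpow_eq_zero_iff, this]
  · simp [ENNReal.rpow_eq_top_iff, this]

theorem lintegral_avMeasure (hΩ : IsOpen Ω) (hne : (frontier Ω).Nonempty) (d p s : ℝ)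
    (k : Euc n → ℝ≥0∞) : ∫⁻ y, k y ∂(avMeasure Ω d p s) =
      ∫⁻ y in Ω, k y * ENNReal.ofReal (bd Ω y) ^ (d - n + p - p * s) := by
  rw [avMeasure, lintegral_withDensity_eq_lintegral_mul_non_measurable₀ _
    (measurable_ofReal_bd_rpow Ω _).aemeasurable]
  · simp [mul_comm]
  · filter_upwards [ae_restrict_mem hΩ.measurableSet] with y hy
    exact (ofReal_bd_rpow_ne hΩ hne hy _).2.lt_top

theorem avNorm_eq_lintegral (hΩ : IsOpen Ω) (hne : (frontier Ω).Nonempty) (d : ℝ) {p : ℝ} (hp : 1 ≤ p)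
    (s : ℝ) (f : Euc n → F) : avNorm Ω d c q (ENNReal.ofReal p) s f =
      (∫⁻ y, wAvg Ω c q f y ^ p ∂(avMeasure Ω d p s)) ^ (1 / p) := by
  rw [avNorm, avNormOn, if_neg ENNReal.ofReal_ne_top, lintegral_avMeasure hΩ hne,
    ENNReal.toReal_ofReal (by linarith)]

theorem ae_avMeasure_mem (hΩ : IsOpen Ω) (d p s : ℝ) : ∀ᵐ y ∂(avMeasure Ω d p s), y ∈ Ω :=
  (withDensity_absolutelyContinuous _ _).ae_le (ae_restrict_mem hΩ.measurableSet)

theorem avNorm_add_le (hΩ : IsOpen Ω) (hne : (frontier Ω).Nonempty) (hc1 : c < 1) (hq1 : 1 ≤ q)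
    (hq : q ≠ ⊤) (d : ℝ) {p : ℝ} (hp : 1 ≤ p) (s : ℝ) {f f' : Euc n → F}
    (hf : AEStronglyMeasurable f (volume.restrict Ω))
    (hf' : AEStronglyMeasurable f' (volume.restrict Ω)) :
    avNorm Ω d c q (ENNReal.ofReal p) s (fun x => f x + f' x) ≤
      avNorm Ω d c q (ENNReal.ofReal p) s f + avNorm Ω d c q (ENNReal.ofReal p) s f' := by
  have hq0 : q ≠ 0 := (zero_lt_one.trans_le hq1).ne'
  have hac := withDensity_absolutelyContinuous (volume.restrict Ω)
    fun y => ENNReal.ofReal (bd Ω y) ^ (d - n + p - p * s)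
  simp only [avNorm_eq_lintegral hΩ hne d hp]
  refine le_trans (ENNReal.rpow_le_rpow (lintegral_mono_ae ?_) (by positivity))
    (ENNReal.lintegral_Lp_add_le ((aemeasurable_wAvg hΩ hne hc1 hq0 hq hf).mono_ac hac)
    ((aemeasurable_wAvg hΩ hne hc1 hq0 hq hf').mono_ac hac) hp)
  filter_upwards [ae_avMeasure_mem hΩ d p s] with y hy
  exact ENNReal.rpow_le_rpow (wAvg_add_le hq1 hf hf' (ball_bd_subset hΩ hne hc1 hy))
    (by positivity)

theorem tendsto_avNorm_zero_of_dominated {F' : Type*} [NormedAddCommGroup F'] (hΩ : IsOpen Ω)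
    (hne : (frontier Ω).Nonempty) (hc1 : c < 1)
    (hq0 : q ≠ 0) (hq : q ≠ ⊤) (d : ℝ) {p : ℝ} (hp : 1 ≤ p) (s : ℝ) {f : ℕ → Euc n → F}
    {f₀ : Euc n → F'}
    (hf : ∀ k, AEStronglyMeasurable (f k) (volume.restrict Ω))
    (hdom : ∀ᶠ k in atTop, ∀ x ∈ Ω, ‖f k x‖ ≤ ‖f₀ x‖)
    (hfin : avNorm Ω d c q (ENNReal.ofReal p) s f₀ < ⊤)
    (hzero : ∀ y ∈ Ω, ∀ᶠ k in atTop, ∀ x ∈ ball y (c * bd Ω y), f k x = 0) :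
    Tendsto (fun k => avNorm Ω d c q (ENNReal.ofReal p) s (f k)) atTop (𝓝 0) := by
  have hp0 : 0 < p := by linarith
  have hac := withDensity_absolutelyContinuous (volume.restrict Ω)
    fun y => ENNReal.ofReal (bd Ω y) ^ (d - n + p - p * s)
  simp only [avNorm_eq_lintegral hΩ hne d hp] at hfin ⊢
  have hlim : Tendsto (fun k => ∫⁻ y, wAvg Ω c q (f k) y ^ p ∂(avMeasure Ω d p s)) atTop
      (𝓝 (∫⁻ _, 0 ∂(avMeasure Ω d p s))) := by
    refine tendsto_lintegral_filter_of_dominated_convergence'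
      (fun y => wAvg Ω c q f₀ y ^ p) ?_ ?_ ?_ ?_
    · exact Eventually.of_forall fun k =>
        ((aemeasurable_wAvg hΩ hne hc1 hq0 hq (hf k)).mono_ac hac).pow_const _
    · filter_upwards [hdom] with k hk
      filter_upwards [ae_avMeasure_mem hΩ d p s] with y hy
      exact ENNReal.rpow_le_rpow (wAvg_mono_on_ball fun x hx =>
        hk x (ball_bd_subset hΩ hne hc1 hy hx)) hp0.le
    · intro h
      rw [h, ENNReal.top_rpow_of_pos (by positivity)] at hfin
      exact hfin.ne rfl
    · filter_upwards [ae_avMeasure_mem hΩ d p s] with y hy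
      refine tendsto_const_nhds.congr' ?_
      filter_upwards [hzero y hy] with k hk
      rw [wAvg_eq_zero hk, ENNReal.zero_rpow_of_pos hp0]
  have := (ENNReal.continuous_rpow_const (y := 1 / p)).tendsto _ |>.comp hlim
  simpa [Function.comp_def, hp0] using this

end Average

theorem exists_contDiff_cutoff_of_lipschitz {l : Euc n → ℝ} (hl : LipschitzWith 1 l) {r : ℝ}
    (hr : 0 < r) : ∃ a : Euc n → ℝ, ContDiff ℝ (⊤ : ℕ∞) a ∧ (∀ x, a x ∈ Icc (0 : ℝ) 1) ∧
      (∀ x, l x ≤ r → a x = 0) ∧ (∀ x, 4 * r ≤ l x → a x = 1) ∧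
      ∀ x, ‖fderiv ℝ a x‖ ≤ 1 / r := by
  set b : Euc n → ℝ := fun x => min 1 (max 0 (l x / r - 2)) with hb
  have hlip : ∀ x y, |b x - b y| ≤ 1 / r * ‖x - y‖ := by
    intro x y
    have h1 : |b x - b y| ≤ |(l x / r - 2) - (l y / r - 2)| :=
      (abs_min_sub_min_le_max _ _ _ _).trans (by
        simpa using abs_max_sub_max_le_max (0 : ℝ) (l x / r - 2) 0 (l y / r - 2))
    refine h1.trans ?_
    have h2 : (l x / r - 2) - (l y / r - 2) = 1 / r * (l x - l y) := by ring
    rw [h2, abs_mul, abs_of_pos (by positivity)]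
    gcongr
    simpa [Real.dist_eq, dist_eq_norm] using hl.dist_le_mul x y
  have hbc : Continuous b := by
    have := hl.continuous
    fun_prop
  have hb01 : ∀ x, b x ∈ Icc (0 : ℝ) 1 := fun x =>
    ⟨le_min zero_le_one (le_max_left _ _), min_le_left _ _⟩
  let φ : ContDiffBump (0 : Euc n) := ⟨r / 2, r, half_pos hr, half_lt_self hr⟩
  have hinteg : ∀ x, Integrable (fun t => φ.normed volume t * b (x - t)) := fun x =>
    (φ.continuous_normed.mul (by fun_prop)).integrable_of_hasCompactSupport
      φ.hasCompactSupport_normed.mul_right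
  set a : Euc n → ℝ := convolution (φ.normed volume) b (ContinuousLinearMap.lsmul ℝ ℝ) volume
    with ha
  have ha_apply : ∀ x, a x = ∫ t, φ.normed volume t * b (x - t) := fun x => rfl
  have hl_ball : ∀ x, ∀ y ∈ ball x r, |l y - l x| < r := fun x y hy => by
    have := hl.dist_le_mul y x
    rw [Real.dist_eq] at this
    have h2 := mem_ball.1 hy
    simp only [NNReal.coe_one, one_mul] at this
    linarith
  have hconst : ∀ x v, (∀ y ∈ ball x r, b y = v) → a x = v := fun x v h => by
    have hx : b x = v := h x (mem_ball_self hr)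
    rw [ha, φ.normed_convolution_eq_right (fun y hy => (h y hy).trans hx.symm), hx]
  refine ⟨a, ?_, fun x => ⟨?_, ?_⟩, fun x hx => hconst x 0 fun y hy => ?_,
    fun x hx => hconst x 1 fun y hy => ?_, fun x => ?_⟩
  · exact φ.hasCompactSupport_normed.contDiff_convolution_left _ φ.contDiff_normed
      hbc.locallyIntegrable
  · rw [ha_apply]
    exact integral_nonneg fun t => mul_nonneg (φ.nonneg_normed t) (hb01 _).1
  · rw [ha_apply, ← φ.integral_normed (μ := volume)]
    exact integral_mono (hinteg x) φ.integrable_normed fun t =>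
      mul_le_of_le_one_right (φ.nonneg_normed t) (hb01 _).2
  · have h := abs_lt.1 (hl_ball x y hy)
    have h2 : l y / r - 2 ≤ 0 := by
      rw [sub_nonpos, div_le_iff₀ hr]
      linarith [h.2]
    simp [hb, max_eq_left h2]
  · have h := abs_lt.1 (hl_ball x y hy)
    have h2 : 1 ≤ l y / r - 2 := by
      rw [le_sub_iff_add_le, le_div_iff₀ hr]
      linarith [h.1]
    exact min_eq_left (h2.trans (le_max_right _ _))
  · refine norm_fderiv_le_of_lip' ℝ (by positivity) (Eventually.of_forall fun y => ?_)
    rw [ha_apply, ha_apply, ← integral_sub (hinteg y) (hinteg x)]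
    calc ‖∫ t, φ.normed volume t * b (y - t) - φ.normed volume t * b (x - t)‖
        ≤ ∫ t, φ.normed volume t * (1 / r * ‖y - x‖) := by
          refine norm_integral_le_of_norm_le (φ.integrable_normed.mul_const _)
            (Eventually.of_forall fun t => ?_)
          rw [← mul_sub, norm_mul, Real.norm_of_nonneg (φ.nonneg_normed t)]
          gcongr
          · exact φ.nonneg_normed t
          · simpa using hlip (y - t) (x - t)
      _ = 1 / r * ‖y - x‖ := by
          rw [integral_mul_const, φ.integral_normed, one_mul]

theorem exists_contDiff_cutoff {Ω : Set (Euc n)} (hΩ : IsOpen Ω) (hne : (frontier Ω).Nonempty)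
    {r R : ℝ} (hr : 0 < r) (hR : 0 < R) (hbdR : bd Ω 0 ≤ R) :
    ∃ χ : Euc n → ℝ, ContDiff ℝ (⊤ : ℕ∞) χ ∧ HasCompactSupport χ ∧ tsupport χ ⊆ Ω ∧
      (∀ x, χ x ∈ Icc (0 : ℝ) 1) ∧ (∀ x ∈ Ω, ‖fderiv ℝ χ x‖ ≤ 9 / bd Ω x) ∧
      ∀ x ∈ Ω, 4 * r ≤ bd Ω x → ‖x‖ ≤ R → χ x = 1 := by
  have hl : LipschitzWith 1 fun x => infDist x Ωᶜ := lipschitz_infDist_pt _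
  obtain ⟨a, ha, ha01, ha0, ha1, hda⟩ := exists_contDiff_cutoff_of_lipschitz hl hr
  obtain ⟨b, hb, hb01, hb0, hb1, hdb⟩ :=
    exists_contDiff_cutoff_of_lipschitz (n := n) lipschitzWith_one_norm hR
  have hbdl : ∀ x ∈ Ω, infDist x Ωᶜ = bd Ω x := fun x hx => (bd_eq_infDist_compl hΩ hne hx).symm
  have hcl : IsClosed ({x | r ≤ infDist x Ωᶜ} ∩ closedBall (0 : Euc n) (4 * R)) :=
    (isClosed_le continuous_const hl.continuous).inter isClosed_closedBall
  have hcpt : IsCompact ({x | r ≤ infDist x Ωᶜ} ∩ closedBall (0 : Euc n) (4 * R)) :=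
    (isCompact_closedBall _ _).of_isClosed_subset hcl inter_subset_right
  have hsupp : tsupport (fun x => a x * (1 - b x)) ⊆
      {x | r ≤ infDist x Ωᶜ} ∩ closedBall (0 : Euc n) (4 * R) := by
    refine closure_minimal (fun x hx => ?_) hcl
    by_contra hcon
    apply hx
    by_cases h : r ≤ infDist x Ωᶜ
    · have h4 : 4 * R ≤ ‖x‖ := by
        by_contra h'
        exact hcon ⟨h, by simpa using (not_le.1 h').le⟩
      simp [hb1 x h4]
    · simp [ha0 x (not_le.1 h).le]
  refine ⟨fun x => a x * (1 - b x), ha.mul (contDiff_const.sub hb),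
    hcpt.of_isClosed_subset (isClosed_tsupport _) hsupp, fun x hx => ?_, fun x => ⟨?_, ?_⟩,
    fun x hx => ?_, fun x hx h4 hxR => ?_⟩
  · by_contra hxΩ
    have h1 := (hsupp hx).1
    rw [mem_ofPred_eq, infDist_zero_of_mem (mem_compl hxΩ)] at h1
    linarith
  · exact mul_nonneg (ha01 x).1 (by linarith [(hb01 x).2])
  · exact mul_le_one₀ (ha01 x).2 (by linarith [(hb01 x).2]) (by linarith [(hb01 x).1])
  · have hpos := bd_pos hΩ hne hx
    have h1 : ‖fderiv ℝ a x‖ ≤ 4 / bd Ω x := by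
      by_cases h : bd Ω x ≤ 4 * r
      · refine (hda x).trans ?_
        rw [div_le_div_iff₀ hr hpos]
        linarith
      · have : a =ᶠ[𝓝 x] fun _ => 1 := by
          have hmem : {y | 4 * r < infDist y Ωᶜ} ∈ 𝓝 x :=
            (isOpen_lt continuous_const hl.continuous).mem_nhds
              (by rw [mem_ofPred_eq, hbdl x hx]; linarith)
          filter_upwards [hmem] with y hy using ha1 y hy.le
        rw [this.fderiv_eq]
        simp only [fderiv_fun_const, Pi.zero_apply, norm_zero]
        positivity
    have h2 : ‖fderiv ℝ b x‖ ≤ 5 / bd Ω x := by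
      by_cases h : ‖x‖ ≤ 4 * R
      · refine (hdb x).trans ?_
        have := bd_sub_le Ω x 0
        rw [dist_zero_right] at this
        rw [div_le_div_iff₀ hR hpos]
        linarith
      · have : b =ᶠ[𝓝 x] fun _ => 1 := by
          have hmem : {y : Euc n | 4 * R < ‖y‖} ∈ 𝓝 x :=
            (isOpen_lt continuous_const continuous_norm).mem_nhds (not_le.1 h)
          filter_upwards [hmem] with y hy using hb1 y hy.le
        rw [this.fderiv_eq]
        simp only [fderiv_fun_const, Pi.zero_apply, norm_zero]
        positivity
    have hda' := (ha.differentiable (by simp) x).hasFDerivAt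
    have hdb' := (hb.differentiable (by simp) x).hasFDerivAt.const_sub 1
    rw [(hda'.fun_mul hdb').fderiv]
    have ha0' := ha01 x
    have hb0' := hb01 x
    calc ‖a x • -fderiv ℝ b x + (1 - b x) • fderiv ℝ a x‖
        ≤ |a x| * ‖fderiv ℝ b x‖ + |1 - b x| * ‖fderiv ℝ a x‖ := by
          refine (norm_add_le _ _).trans ?_
          rw [norm_smul, norm_smul, norm_neg, Real.norm_eq_abs, Real.norm_eq_abs]
      _ ≤ 1 * (5 / bd Ω x) + 1 * (4 / bd Ω x) := by
          gcongr
          · exact abs_le.2 ⟨by linarith [ha0'.1], ha0'.2⟩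
          · exact abs_le.2 ⟨by linarith [hb0'.2], by linarith [hb0'.1]⟩
      _ = 9 / bd Ω x := by ring
  · simp only
    rw [ha1 x (by rwa [hbdl x hx]), hb0 x hxR]
    simp

section Local

variable {F : Type*} [NormedAddCommGroup F] {Ω : Set (Euc n)} {c : ℝ} {q : ℝ≥0∞}

theorem eLpNorm_restrict_lt_top_of_wAvg_lt_top (hq : q ≠ ⊤) {f : Euc n → F}
    {y : Euc n} (h : wAvg Ω c q f y < ⊤) :
    eLpNorm f q (volume.restrict (ball y (c * bd Ω y))) < ⊤ := by
  rw [wAvg, eLpNorm_smul_measure_of_ne_top hq, smul_eq_mul, ENNReal.mul_lt_top_iff] at h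
  have hc0 : ((volume (ball y (c * bd Ω y)))⁻¹ ^ (1 / q).toReal) ≠ 0 := by
    simp [ENNReal.rpow_eq_zero_iff, measure_ball_lt_top.ne]
  rcases h with h | h | h
  · exact h.2
  · exact absurd h hc0
  · simp [h]

theorem exists_eLpNorm_ball_lt_top (hΩ : IsOpen Ω) (hne : (frontier Ω).Nonempty) (hc : 0 < c)
    (hc1 : c < 1) (hq0 : q ≠ 0) (hq : q ≠ ⊤) {d p s : ℝ} (hp : 1 ≤ p) {f : Euc n → F}
    (hf : AEStronglyMeasurable f (volume.restrict Ω))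
    (hfin : avNorm Ω d c q (ENNReal.ofReal p) s f < ⊤) {x : Euc n} (hx : x ∈ Ω) :
    ∃ r, 0 < r ∧ eLpNorm f q (volume.restrict (ball x r)) < ⊤ := by
  have hp0 : 0 < p := by linarith
  rw [avNorm_eq_lintegral hΩ hne d hp, lintegral_avMeasure hΩ hne] at hfin
  have hinteg : ∫⁻ y in Ω, wAvg Ω c q f y ^ p *
      ENNReal.ofReal (bd Ω y) ^ (d - n + p - p * s) ≠ ⊤ := by
    intro h
    rw [h, ENNReal.top_rpow_of_pos (by positivity)] at hfin
    exact hfin.ne rfl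
  have hae := ae_lt_top' (((aemeasurable_wAvg hΩ hne hc1 hq0 hq hf).pow_const p).mul
    (measurable_ofReal_bd_rpow Ω _).aemeasurable) hinteg
  rw [ae_restrict_iff' hΩ.measurableSet] at hae
  have hpos := bd_pos hΩ hne hx
  have hr : 0 < c * bd Ω x / 4 := by positivity
  have hfreq : ∃ y ∈ ball x (c * bd Ω x / 4), y ∈ Ω →
      wAvg Ω c q f y ^ p * ENNReal.ofReal (bd Ω y) ^ (d - n + p - p * s) < ⊤ := by
    by_contra! hcon
    have hsub : ball x (c * bd Ω x / 4) ⊆ {y | ¬ (y ∈ Ω →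
        wAvg Ω c q f y ^ p * ENNReal.ofReal (bd Ω y) ^ (d - n + p - p * s) < ⊤)} := by
      intro y hy h
      exact (h (hcon y hy).1).not_ge (hcon y hy).2
    exact (measure_ball_pos volume x hr).ne' (measure_mono_null hsub hae)
  obtain ⟨y, hy, hfy⟩ := hfreq
  have hyΩ : y ∈ Ω := ball_bd_subset hΩ hne (c := c / 4) (by linarith) hx
    (ball_subset_ball (by linarith) hy)
  have hw : wAvg Ω c q f y < ⊤ := by
    by_contra h
    rw [not_lt, top_le_iff] at h
    have := hfy hyΩ
    rw [h, ENNReal.top_rpow_of_pos hp0, ENNReal.top_mul (ofReal_bd_rpow_ne hΩ hne hyΩ _).1] at this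
    exact this.ne rfl
  refine ⟨c * bd Ω x / 4, hr, lt_of_le_of_lt (eLpNorm_mono_measure _
    (Measure.restrict_mono ?_ le_rfl)) (eLpNorm_restrict_lt_top_of_wAvg_lt_top hq hw)⟩
  refine ball_subset_ball' ?_
  have h1 := mem_ball.1 hy
  have h2 := bd_sub_le Ω x y
  rw [dist_comm] at h1
  nlinarith

theorem eLpNorm_restrict_compact_lt_top (hΩ : IsOpen Ω) (hne : (frontier Ω).Nonempty) (hc : 0 < c)
    (hc1 : c < 1) (hq0 : q ≠ 0) (hq : q ≠ ⊤) {d p s : ℝ} (hp : 1 ≤ p) {f : Euc n → F}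
    (hf : AEStronglyMeasurable f (volume.restrict Ω))
    (hfin : avNorm Ω d c q (ENNReal.ofReal p) s f < ⊤) {K : Set (Euc n)} (hK : IsCompact K)
    (hKΩ : K ⊆ Ω) : eLpNorm f q (volume.restrict K) < ⊤ := by
  refine hK.induction_on (p := fun K => eLpNorm f q (volume.restrict K) < ⊤) (by simp)
    (fun S T hST hT => (eLpNorm_mono_measure _ (Measure.restrict_mono hST le_rfl)).trans_lt hT)
    (fun S T hS hT => ?_) fun x hx => ?_
  · rw [eLpNorm_lt_top_iff_lintegral_rpow_enorm_lt_top hq0 hq] at hS hT ⊢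
    exact (lintegral_union_le _ S T).trans_lt (ENNReal.add_lt_top.2 ⟨hS, hT⟩)
  · obtain ⟨r, hr, h⟩ := exists_eLpNorm_ball_lt_top hΩ hne hc hc1 hq0 hq hp hf hfin (hKΩ hx)
    exact ⟨ball x r, mem_nhdsWithin_of_mem_nhds (ball_mem_nhds x hr), h⟩

theorem exists_avNorm_le_mul_eLpNorm (hΩ : IsOpen Ω) (hne : (frontier Ω).Nonempty) (hc : 0 < c)
    (hc1 : c < 1) (hq : q ≠ ⊤) (d : ℝ) {p : ℝ} (hp : 1 ≤ p) (s : ℝ) {K : Set (Euc n)}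
    (hK : IsCompact K) (hKΩ : K ⊆ Ω) : ∃ C : ℝ≥0∞, C ≠ ⊤ ∧ ∀ f : Euc n → F,
      (∀ x, x ∉ K → f x = 0) →
        avNorm Ω d c q (ENNReal.ofReal p) s f ≤ C * eLpNorm f q volume := by
  have hp0 : 0 < p := by linarith
  rcases K.eq_empty_or_nonempty with rfl | hKne
  · refine ⟨0, by simp, fun f hf => ?_⟩
    rw [avNorm_eq_lintegral hΩ hne d hp]
    have : ∀ y, wAvg Ω c q f y = 0 := fun y => wAvg_eq_zero fun x _ => hf x (by simp)
    simp [this, hp0]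
  obtain ⟨x₁, hx₁, hmin⟩ := hK.exists_isMinOn hKne (continuous_bd Ω).continuousOn
  obtain ⟨x₂, hx₂, hmax⟩ := hK.exists_isMaxOn hKne (continuous_bd Ω).continuousOn
  obtain ⟨L, hL⟩ := hK.isBounded.exists_norm_le
  have hm0 := bd_pos hΩ hne (hKΩ hx₁)
  have hM0 := bd_pos hΩ hne (hKΩ hx₂)
  set m := bd Ω x₁ / 2 with hm
  set M := bd Ω x₂ / (1 - c) with hM
  have h1c : 0 < 1 - c := by linarith
  have hmpos : 0 < m := by positivity
  set e := d - n + p - p * s with he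
  set V : ℝ≥0∞ := ((volume (ball (0 : Euc n) (c * m)))⁻¹) ^ (1 / q).toReal with hV
  set W : ℝ≥0∞ := ENNReal.ofReal m ^ e + ENNReal.ofReal M ^ e with hW
  have hMpos : 0 < M := by positivity
  have hVtop : V ≠ ⊤ := by
    refine ENNReal.rpow_ne_top_of_nonneg (by positivity) ?_
    exact ENNReal.inv_ne_top.2 (measure_ball_pos volume _ (by positivity)).ne'
  have hWtop : W ≠ ⊤ := by
    refine ENNReal.add_ne_top.2 ⟨?_, ?_⟩
    · simp [ENNReal.rpow_eq_top_iff, hmpos]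
    · simp [ENNReal.rpow_eq_top_iff, hMpos]
  set B : Set (Euc n) := closedBall 0 (L + M) with hB
  have hBtop : volume B ≠ ⊤ := measure_closedBall_lt_top.ne
  refine ⟨(V ^ p * W * volume B) ^ (1 / p), ?_, fun f hf => ?_⟩
  · refine ENNReal.rpow_ne_top_of_nonneg (by positivity) ?_
    exact ENNReal.mul_ne_top (ENNReal.mul_ne_top
      (ENNReal.rpow_ne_top_of_nonneg hp0.le hVtop) hWtop) hBtop
  have hbound : ∀ y ∈ Ω, wAvg Ω c q f y ^ p * ENNReal.ofReal (bd Ω y) ^ e ≤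
      B.indicator (fun _ => V ^ p * W * eLpNorm f q volume ^ p) y := by
    intro y hy
    by_cases hyK : ∀ x ∈ ball y (c * bd Ω y), f x = 0
    · rw [wAvg_eq_zero hyK, ENNReal.zero_rpow_of_pos hp0, zero_mul]
      exact zero_le
    push Not at hyK
    obtain ⟨x, hxy, hfx⟩ := hyK
    have hxK : x ∈ K := by
      by_contra h
      exact hfx (hf x h)
    have hxy' := mem_ball.1 hxy
    have hb1 := bd_sub_le Ω x y
    have hb2 := bd_sub_le Ω y x
    rw [dist_comm] at hb2
    have hb3 : bd Ω x₁ ≤ bd Ω x := hmin hxK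
    have hb4 : bd Ω x ≤ bd Ω x₂ := hmax hxK
    have hypos := bd_pos hΩ hne hy
    have hmy : m ≤ bd Ω y := by
      rw [hm]
      nlinarith
    have hyM : bd Ω y ≤ M := by
      rw [hM, le_div_iff₀ h1c]
      nlinarith
    have hyB : y ∈ B := by
      have h1 := hL x hxK
      have h2 : ‖y‖ ≤ ‖x‖ + dist x y := by
        rw [dist_eq_norm, norm_sub_rev]
        exact norm_le_norm_add_norm_sub' y x
      rw [hB, mem_closedBall_zero_iff]
      nlinarith
    rw [indicator_of_mem hyB]
    have hw : wAvg Ω c q f y ≤ V * eLpNorm f q volume := by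
      rw [wAvg, eLpNorm_smul_measure_of_ne_top hq, smul_eq_mul]
      refine mul_le_mul' ?_ (eLpNorm_mono_measure _ Measure.restrict_le_self)
      refine ENNReal.rpow_le_rpow (ENNReal.inv_le_inv.2 ?_) (by positivity)
      rw [← Measure.addHaar_ball_center volume y]
      exact measure_mono (ball_subset_ball (by gcongr))
    have hwt : ENNReal.ofReal (bd Ω y) ^ e ≤ W := by
      rcases le_total 0 e with he0 | he0
      · exact le_add_left (ENNReal.rpow_le_rpow (ENNReal.ofReal_le_ofReal hyM) he0)
      · refine le_add_right ?_
        rw [← neg_neg e, ENNReal.rpow_neg, ENNReal.rpow_neg (ENNReal.ofReal m)]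
        exact ENNReal.inv_le_inv.2
          (ENNReal.rpow_le_rpow (ENNReal.ofReal_le_ofReal hmy) (neg_nonneg.2 he0))
    calc wAvg Ω c q f y ^ p * ENNReal.ofReal (bd Ω y) ^ e
        ≤ (V * eLpNorm f q volume) ^ p * W :=
          mul_le_mul' (ENNReal.rpow_le_rpow hw hp0.le) hwt
      _ = V ^ p * W * eLpNorm f q volume ^ p := by
          rw [ENNReal.mul_rpow_of_nonneg _ _ hp0.le]
          ring
  rw [avNorm_eq_lintegral hΩ hne d hp, lintegral_avMeasure hΩ hne]
  calc (∫⁻ y in Ω, wAvg Ω c q f y ^ p * ENNReal.ofReal (bd Ω y) ^ e) ^ (1 / p)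
      ≤ (V ^ p * W * volume B * eLpNorm f q volume ^ p) ^ (1 / p) := by
        refine ENNReal.rpow_le_rpow ?_ (by positivity)
        refine (setLIntegral_mono' hΩ.measurableSet hbound).trans ?_
        refine (setLIntegral_le_lintegral _ _).trans ?_
        rw [lintegral_indicator measurableSet_closedBall, setLIntegral_const]
        exact le_of_eq (by ring)
    _ = (V ^ p * W * volume B) ^ (1 / p) * eLpNorm f q volume := by
        rw [ENNReal.mul_rpow_of_nonneg _ _ (by positivity),
          ← ENNReal.rpow_mul (eLpNorm f q volume),
          mul_one_div_cancel hp0.ne', ENNReal.rpow_one]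

end Local

section Mollify

variable {F : Type*} [NormedAddCommGroup F] {q : ℝ≥0∞}

theorem tendsto_eLpNorm_translate_sub (hq1 : 1 ≤ q) (hq : q ≠ ⊤) {f : Euc n → F}
    (hf : MemLp f q volume) :
    Tendsto (fun t => eLpNorm (fun x => f (x - t) - f x) q volume) (𝓝 0) (𝓝 0) := by
  have : Fact (1 ≤ q) := ⟨hq1⟩
  let T : Euc n → C(Euc n, Euc n) := fun t => ⟨fun x => x - t, by fun_prop⟩
  have hT : Continuous T := ContinuousMap.continuous_of_continuous_uncurry _
    (by simp only [T, Function.uncurry_def, ContinuousMap.coe_mk]; fun_prop)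
  have hTm : ∀ t, MeasurePreserving (T t) (volume : Measure (Euc n)) volume :=
    fun t => measurePreserving_sub_right volume t
  have h : Tendsto (fun t => Lp.compMeasurePreserving (T t) (hTm t) hf.toLp) (𝓝 0)
      (𝓝 (Lp.compMeasurePreserving (T 0) (hTm 0) hf.toLp)) :=
    tendsto_const_nhds.compMeasurePreservingLp (hT.tendsto 0) hTm (hTm 0) hq
  have h0 := tendsto_iff_edist_tendsto_0.1 h
  refine h0.congr fun t => ?_
  rw [Lp.edist_def]
  refine eLpNorm_congr_ae ?_
  have h1 : ∀ t, Lp.compMeasurePreserving (T t) (hTm t) hf.toLp =ᵐ[volume] fun x => f (x - t) :=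
    fun t => (Lp.coeFn_compMeasurePreserving _ (hTm t)).trans
      ((hTm t).quasiMeasurePreserving.ae_eq_comp hf.coeFn_toLp)
  filter_upwards [h1 t, h1 0] with x hx hx0
  rw [Pi.sub_apply, hx, hx0, sub_zero]

variable [NormedSpace ℝ F]

theorem integrable_normed_smul_translate (ρ : ContDiffBump (0 : Euc n)) {f : Euc n → F}
    (hf : LocallyIntegrable f volume) (x : Euc n) :
    Integrable (fun t => ρ.normed volume t • f (x - t)) :=
  ρ.hasCompactSupport_normed.convolutionExists_left (ContinuousLinearMap.lsmul ℝ ℝ)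
    ρ.continuous_normed hf x

variable [CompleteSpace F]

theorem eLpNorm_mollify_sub_le (hq1 : 1 ≤ q) (hq : q ≠ ⊤) {f : Euc n → F}
    (hf : MemLp f q volume) (ρ : ContDiffBump (0 : Euc n)) {ε : ℝ≥0∞}
    (hε : ∀ t ∈ ball (0 : Euc n) ρ.rOut, eLpNorm (fun x => f (x - t) - f x) q volume ≤ ε) :
    eLpNorm (fun x => (∫ t, ρ.normed volume t • f (x - t)) - f x) q volume ≤ ε := by
  have hq0 : q ≠ 0 := (zero_lt_one.trans_le hq1).ne'
  have hqr : 0 < q.toReal := ENNReal.toReal_pos hq0 hq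
  set w : Euc n → ℝ≥0∞ := fun t => ENNReal.ofReal (ρ.normed volume t) with hw
  have hwm : Measurable w := ρ.continuous_normed.measurable.ennreal_ofReal
  set ν : Measure (Euc n) := volume.withDensity w with hν
  have hνprob : IsProbabilityMeasure ν := by
    constructor
    rw [hν, withDensity_apply _ MeasurableSet.univ, Measure.restrict_univ,
      ← ofReal_integral_eq_lintegral_ofReal ρ.integrable_normed
        (Eventually.of_forall ρ.nonneg_normed), ρ.integral_normed, ENNReal.ofReal_one]
  have hνac : ν ≪ volume := withDensity_absolutelyContinuous _ _
  have hνlint : ∀ k : Euc n → ℝ≥0∞, ∫⁻ t, k t ∂ν = ∫⁻ t, w t * k t := fun k =>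
    lintegral_withDensity_eq_lintegral_mul_non_measurable _ hwm
      (Eventually.of_forall fun t => ENNReal.ofReal_lt_top) k
  have hνball : ∀ᵐ t ∂ν, t ∈ ball (0 : Euc n) ρ.rOut := by
    rw [hν, ae_withDensity_iff hwm]
    refine Eventually.of_forall fun t ht => ?_
    rw [← ρ.support_normed_eq (μ := volume)]
    intro h
    simp [hw, h] at ht
  have hloc : LocallyIntegrable f volume := hf.locallyIntegrable hq1
  have hpt : ∀ x, ‖(∫ t, ρ.normed volume t • f (x - t)) - f x‖ₑ ^ q.toReal ≤
      ∫⁻ t, ‖f (x - t) - f x‖ₑ ^ q.toReal ∂ν := by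
    intro x
    have hm : AEStronglyMeasurable (fun t => f (x - t) - f x) ν :=
      ((hf.1.comp_quasiMeasurePreserving
        (Measure.measurePreserving_sub_left volume x).quasiMeasurePreserving).sub
          aestronglyMeasurable_const).mono_ac hνac
    have h1 : (∫ t, ρ.normed volume t • f (x - t)) - f x =
        ∫ t, ρ.normed volume t • (f (x - t) - f x) := by
      simp only [smul_sub]
      rw [integral_sub (integrable_normed_smul_translate ρ hloc x)
        (ρ.integrable_normed.smul_const _), ρ.integral_normed_smul]
    have h2 : ‖(∫ t, ρ.normed volume t • f (x - t)) - f x‖ₑ ≤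
        eLpNorm (fun t => f (x - t) - f x) 1 ν := by
      rw [h1, eLpNorm_one_eq_lintegral_enorm, hνlint]
      refine (enorm_integral_le_lintegral_enorm _).trans (lintegral_mono fun t => ?_)
      rw [enorm_smul, Real.enorm_of_nonneg (ρ.nonneg_normed t)]
    have h3 := h2.trans (eLpNorm_le_eLpNorm_of_exponent_le hq1 hm)
    rw [eLpNorm_eq_lintegral_rpow_enorm_toReal hq0 hq] at h3
    calc _ ≤ _ := ENNReal.rpow_le_rpow h3 hqr.le
      _ = _ := by rw [← ENNReal.rpow_mul, one_div_mul_cancel hqr.ne', ENNReal.rpow_one]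
  have hmeas : AEMeasurable (Function.uncurry fun x t => ‖f (x - t) - f x‖ₑ ^ q.toReal)
      ((volume : Measure (Euc n)).prod ν) := by
    refine AEMeasurable.pow_const (AEStronglyMeasurable.enorm ?_) _
    refine AEStronglyMeasurable.sub ?_ hf.1.comp_fst
    exact hf.1.comp_quasiMeasurePreserving (quasiMeasurePreserving_sub volume ν)
  have hεpow : ∀ t ∈ ball (0 : Euc n) ρ.rOut,
      ∫⁻ x, ‖f (x - t) - f x‖ₑ ^ q.toReal ≤ ε ^ q.toReal := by
    intro t ht
    have := ENNReal.rpow_le_rpow (hε t ht) hqr.le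
    rwa [eLpNorm_eq_lintegral_rpow_enorm_toReal hq0 hq, ← ENNReal.rpow_mul,
      one_div_mul_cancel hqr.ne', ENNReal.rpow_one] at this
  rw [eLpNorm_eq_lintegral_rpow_enorm_toReal hq0 hq]
  calc (∫⁻ x, ‖(∫ t, ρ.normed volume t • f (x - t)) - f x‖ₑ ^ q.toReal) ^ (1 / q.toReal)
      ≤ (ε ^ q.toReal) ^ (1 / q.toReal) := by
        refine ENNReal.rpow_le_rpow ?_ (by positivity)
        refine (lintegral_mono hpt).trans ?_
        rw [lintegral_lintegral_swap hmeas]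
        refine (lintegral_mono_ae (g := fun _ => ε ^ q.toReal) ?_).trans ?_
        · filter_upwards [hνball] with t ht using hεpow t ht
        · simp
    _ = ε := by rw [← ENNReal.rpow_mul, mul_one_div_cancel hqr.ne', ENNReal.rpow_one]

theorem eventually_eLpNorm_mollify_sub_le (hq1 : 1 ≤ q) (hq : q ≠ ⊤) {f : Euc n → F}
    (hf : MemLp f q volume) {ε : ℝ≥0∞} (hε : 0 < ε) :
    ∀ᶠ η in 𝓝[>] (0 : ℝ), ∀ ρ : ContDiffBump (0 : Euc n), ρ.rOut ≤ η →
      eLpNorm (fun x => (∫ t, ρ.normed volume t • f (x - t)) - f x) q volume ≤ ε := by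
  have h := (tendsto_eLpNorm_translate_sub hq1 hq hf).eventually (ge_mem_nhds hε)
  obtain ⟨η₀, hη₀, hball⟩ := Metric.eventually_nhds_iff_ball.1 h
  filter_upwards [Ioo_mem_nhdsGT hη₀] with η hη ρ hρ
  exact eLpNorm_mollify_sub_le hq1 hq hf ρ fun t ht =>
    hball t (ball_subset_ball (hρ.trans hη.2.le) ht)

end Mollify

section WeakGradient

variable {F : Type*} [NormedAddCommGroup F] {Ω K : Set (Euc n)}

theorem fderiv_eq_inner_gradient (φ : Euc n → ℝ) (x w : Euc n) :
    fderiv ℝ φ x w = ⟪gradient φ x, w⟫ := by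
  simp [gradient]

theorem gradient_eq_zero_of_notMem_tsupport {φ : Euc n → ℝ} {x : Euc n} (hx : x ∉ tsupport φ) :
    gradient φ x = 0 := by
  have h : φ =ᶠ[𝓝 x] fun _ => (0 : ℝ) := notMem_tsupport_iff_eventuallyEq.1 hx
  rw [gradient, h.fderiv_eq]
  simp

theorem norm_gradient (φ : Euc n → ℝ) (x : Euc n) : ‖gradient φ x‖ = ‖fderiv ℝ φ x‖ := by
  simp [gradient]

theorem continuous_gradient {φ : Euc n → ℝ} (hφ : ContDiff ℝ (⊤ : ℕ∞) φ) :
    Continuous (gradient φ) :=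
  (LinearIsometryEquiv.continuous _).comp (hφ.continuous_fderiv (by simp))

/-- The product of a locally integrable function with a continuous function supported in a
compact subset is integrable. -/
theorem integrable_smul_of_locallyIntegrableOn [NormedSpace ℝ F] {f : Euc n → F}
    (hf : LocallyIntegrableOn f Ω volume) (hK : IsCompact K) (hKΩ : K ⊆ Ω) {ψ : Euc n → ℝ}
    (hψ : Continuous ψ) (h0 : ∀ x, x ∉ K → ψ x = 0) : Integrable (fun x => ψ x • f x) := by
  have h1 : IntegrableOn (fun x => ψ x • f x) K :=
    (hf.integrableOn_compact_subset hKΩ hK).continuousOn_smul hψ.continuousOn hK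
  refine (integrableOn_iff_integrable_of_support_subset fun x hx => ?_).1 h1
  by_contra hxK
  exact hx (by simp [h0 x hxK])

/-- Leibniz rule for a weak gradient multiplied by a test function. -/
theorem HasWeakGradOn.integral_mul_fderiv {u : Euc n → ℝ} {g : Euc n → Euc n}
    (h : HasWeakGradOn u g Ω) {χ : Euc n → ℝ} (hχ : IsTestOn Ω χ) {φ : Euc n → ℝ}
    (hφ : ContDiff ℝ (⊤ : ℕ∞) φ) (w : Euc n) :
    ∫ x, χ x * u x * fderiv ℝ φ x w = -∫ x, ⟪χ x • g x + u x • gradient χ x, w⟫ * φ x := by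
  obtain ⟨hu, hg, hug⟩ := h
  obtain ⟨hχs, hχc, hχΩ⟩ := hχ
  have hzero : ∀ x, x ∉ tsupport χ → χ x = 0 := fun x hx => image_eq_zero_of_notMem_tsupport hx
  have hdzero : ∀ x, x ∉ tsupport χ → gradient χ x = 0 := fun x hx =>
    gradient_eq_zero_of_notMem_tsupport hx
  have htest : IsTestOn Ω (fun x => χ x * φ x) :=
    ⟨hχs.mul hφ, hχc.mul_right, (tsupport_mul_subset_left).trans hχΩ⟩
  have hφw : Continuous fun x => fderiv ℝ φ x w := 
    (hφ.continuous_fderiv (by simp)).clm_apply continuous_const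
  have hχw : Continuous fun x => fderiv ℝ χ x w := 
    (hχs.continuous_fderiv (by simp)).clm_apply continuous_const
  have key := hug _ htest w
  have hderiv : ∀ x, fderiv ℝ (fun x => χ x * φ x) x w =
      χ x * fderiv ℝ φ x w + φ x * ⟪gradient χ x, w⟫ := by
    intro x
    rw [((hχs.differentiable (by simp) x).hasFDerivAt.fun_mul
      (hφ.differentiable (by simp) x).hasFDerivAt).fderiv, ← fderiv_eq_inner_gradient]
    rfl
  rw [setIntegral_eq_integral_of_forall_compl_eq_zero,
    setIntegral_eq_integral_of_forall_compl_eq_zero] at key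
  rotate_left
  · intro x hx
    simp [hzero x fun h => hx (hχΩ h)]
  · intro x hx
    rw [hderiv, hzero x fun h => hx (hχΩ h), hdzero x fun h => hx (hχΩ h)]
    simp
  have i1 : Integrable fun x => χ x * u x * fderiv ℝ φ x w :=
    (integrable_smul_of_locallyIntegrableOn hu hχc hχΩ (hχs.continuous.mul hφw)
      fun x hx => by simp [hzero x hx]).congr
      (Eventually.of_forall fun x => by simp only [smul_eq_mul, Pi.mul_apply]; ring)
  have i2 : Integrable fun x => u x * ⟪gradient χ x, w⟫ * φ x :=
    (integrable_smul_of_locallyIntegrableOn hu hχc hχΩ (hφ.continuous.mul hχw)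
      fun x hx => by
        rw [Pi.mul_apply, fderiv_eq_inner_gradient, hdzero x hx, inner_zero_left, mul_zero]).congr
      (Eventually.of_forall fun x => by
        simp only [smul_eq_mul, Pi.mul_apply]
        rw [fderiv_eq_inner_gradient]
        ring)
  have i3 : Integrable fun x => ⟪g x, w⟫ * (χ x * φ x) :=
    ((integrable_smul_of_locallyIntegrableOn hg hχc hχΩ (hχs.continuous.mul hφ.continuous)
      fun x hx => by simp [hzero x hx]).inner_const w).congr
      (Eventually.of_forall fun x => by
        simp only [real_inner_smul_left, Pi.mul_apply]; ring)
  have e1 : ∫ x, u x * fderiv ℝ (fun x => χ x * φ x) x w =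
      (∫ x, χ x * u x * fderiv ℝ φ x w) + ∫ x, u x * ⟪gradient χ x, w⟫ * φ x := by
    rw [← integral_add i1 i2]
    refine integral_congr_ae (Eventually.of_forall fun x => ?_)
    simp only [hderiv]
    ring
  have e2 : ∫ x, ⟪χ x • g x + u x • gradient χ x, w⟫ * φ x =
      (∫ x, ⟪g x, w⟫ * (χ x * φ x)) + ∫ x, u x * ⟪gradient χ x, w⟫ * φ x := by
    rw [← integral_add i3 i2]
    refine integral_congr_ae (Eventually.of_forall fun x => ?_)
    simp only [inner_add_left, real_inner_smul_left]
    ring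
  rw [e2]
  linarith

/-- The gradient of a mollification is the mollification of the weak gradient. -/
theorem hasGradientAt_mollify {v : Euc n → ℝ} {h : Euc n → Euc n}
    (hv : LocallyIntegrable v volume) (hh : LocallyIntegrable h volume)
    (hvh : ∀ φ : Euc n → ℝ, ContDiff ℝ (⊤ : ℕ∞) φ → HasCompactSupport φ → ∀ w : Euc n,
      ∫ x, v x * fderiv ℝ φ x w = -∫ x, ⟪h x, w⟫ * φ x)
    (ρ : ContDiffBump (0 : Euc n)) (x : Euc n) :
    HasGradientAt (fun x => ∫ t, ρ.normed volume t • v (x - t))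
      (∫ t, ρ.normed volume t • h (x - t)) x := by
  have hρ : ContDiff ℝ (⊤ : ℕ∞) (ρ.normed volume) := ρ.contDiff_normed
  have hd := ρ.hasCompactSupport_normed.hasFDerivAt_convolution_left
    (ContinuousLinearMap.lsmul ℝ ℝ) (hρ.of_le (by exact_mod_cast le_top)) hv x
  rw [hasGradientAt_iff_hasFDerivAt]
  refine hd.congr_fderiv (ContinuousLinearMap.ext fun w => ?_)
  have hinteg := (ρ.hasCompactSupport_normed (μ := volume)).fderiv ℝ |>.convolutionExists_left
    ((ContinuousLinearMap.lsmul ℝ ℝ).precompL (Euc n)) (hρ.continuous_fderiv (by simp)) hv x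
  have e1 : (convolution (fderiv ℝ (ρ.normed volume)) v
      ((ContinuousLinearMap.lsmul ℝ ℝ).precompL (Euc n)) volume x) w =
      ∫ t, fderiv ℝ (ρ.normed volume) t w * v (x - t) := by
    rw [convolution_def, ContinuousLinearMap.integral_apply hinteg]
    rfl
  have hψ : ContDiff ℝ (⊤ : ℕ∞) fun y => ρ.normed volume (x - y) :=
    hρ.comp (contDiff_const.sub contDiff_id)
  have hψc : HasCompactSupport fun y => ρ.normed volume (x - y) :=
    ρ.hasCompactSupport_normed.comp_homeomorph (Homeomorph.subLeft x)
  have hψd : ∀ y, fderiv ℝ (fun y => ρ.normed volume (x - y)) y w =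
      -fderiv ℝ (ρ.normed volume) (x - y) w := by
    intro y
    have h1 : HasFDerivAt (fun y => x - y) (-ContinuousLinearMap.id ℝ (Euc n)) y :=
      (hasFDerivAt_id y).const_sub x
    have h2 : HasFDerivAt (fun y => ρ.normed volume (x - y)) _ y :=
      (hρ.differentiable (by simp) (x - y)).hasFDerivAt.comp y h1
    rw [h2.fderiv]
    simp
  have key := hvh _ hψ hψc w
  simp only [hψd, mul_neg, integral_neg, neg_inj] at key
  have e2 : ∫ t, fderiv ℝ (ρ.normed volume) t w * v (x - t) =
      ∫ y, v y * fderiv ℝ (ρ.normed volume) (x - y) w := by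
    rw [← integral_sub_left_eq_self _ volume x]
    simp only [sub_sub_cancel, mul_comm]
  have e3 : ∫ t, ρ.normed volume t • h (x - t) = ∫ y, ρ.normed volume (x - y) • h y := by
    rw [← integral_sub_left_eq_self _ volume x]
    simp only [sub_sub_cancel]
  have hinteg' : Integrable fun y => ρ.normed volume (x - y) • h y := by
    have := (integrable_normed_smul_translate ρ hh x).comp_sub_left x
    simpa only [sub_sub_cancel] using this
  rw [e1, e2, key, e3, InnerProductSpace.toDual_apply_apply, real_inner_comm,
    ← integral_inner hinteg']
  refine integral_congr_ae (Eventually.of_forall fun y => ?_)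
  simp only [real_inner_smul_right, real_inner_comm, mul_comm]

/-- A function which vanishes outside a compact set has mollifications which vanish outside its
thickening. -/
theorem mollify_eq_zero [NormedSpace ℝ F] {f : Euc n → F} (h0 : ∀ x, x ∉ K → f x = 0) {η : ℝ}
    {ρ : ContDiffBump (0 : Euc n)} (hρ : ρ.rOut ≤ η) {x : Euc n} (hx : x ∉ cthickening η K) :
    ∫ t, ρ.normed volume t • f (x - t) = 0 := by
  refine integral_eq_zero_of_ae (Eventually.of_forall fun t => ?_)
  by_cases ht : t ∈ ball (0 : Euc n) ρ.rOut
  · have : x - t ∉ K := fun hK => hx <| mem_cthickening_of_dist_le x (x - t) η K hK <| by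
      rw [dist_eq_norm, sub_sub_cancel]
      exact (mem_ball_zero_iff.1 ht).le.trans hρ
    simp [h0 _ this]
  · rw [← ρ.support_normed_eq (μ := volume), Function.mem_support, not_not] at ht
    simp [ht]

/-- Approximation of a compactly supported Sobolev function by its mollifications. -/
theorem exists_contDiff_approx {q : ℝ≥0∞} (hq1 : 1 ≤ q) (hq : q ≠ ⊤) (hΩ : IsOpen Ω)
    (hK : IsCompact K) (hKΩ : K ⊆ Ω) {v : Euc n → ℝ} {h : Euc n → Euc n}
    (hv : MemLp v q volume) (hh : MemLp h q volume) (hv0 : ∀ x, x ∉ K → v x = 0)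
    (hh0 : ∀ x, x ∉ K → h x = 0)
    (hvh : ∀ φ : Euc n → ℝ, ContDiff ℝ (⊤ : ℕ∞) φ → HasCompactSupport φ → ∀ w : Euc n,
      ∫ x, v x * fderiv ℝ φ x w = -∫ x, ⟪h x, w⟫ * φ x) :
    ∃ K' : Set (Euc n), IsCompact K' ∧ K' ⊆ Ω ∧ ∀ ε : ℝ≥0∞, 0 < ε →
      ∃ φ : Euc n → ℝ, IsTestOn Ω φ ∧ (∀ x, x ∉ K' → v x - φ x = 0) ∧
        (∀ x, x ∉ K' → h x - gradient φ x = 0) ∧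
        eLpNorm (fun x => v x - φ x) q volume ≤ ε ∧
        eLpNorm (fun x => h x - gradient φ x) q volume ≤ ε := by
  obtain ⟨η₀, hη₀, hsub⟩ := hK.exists_cthickening_subset_open hΩ hKΩ
  have hK' : IsCompact (cthickening η₀ K) := hK.cthickening
  refine ⟨cthickening η₀ K, hK', hsub, fun ε hε => ?_⟩
  have hvl := hv.locallyIntegrable hq1
  have hhl := hh.locallyIntegrable hq1
  obtain ⟨η, ⟨hηv, hηh⟩, hη⟩ := ((eventually_eLpNorm_mollify_sub_le hq1 hq hv hε).and
    (eventually_eLpNorm_mollify_sub_le hq1 hq hh hε)).and (Ioo_mem_nhdsGT hη₀) |>.exists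
  let ρ : ContDiffBump (0 : Euc n) := ⟨η / 2, η, half_pos hη.1, half_lt_self hη.1⟩
  have hρ : ρ.rOut ≤ η := le_rfl
  have hgrad : ∀ x, gradient (fun x => ∫ t, ρ.normed volume t • v (x - t)) x =
      ∫ t, ρ.normed volume t • h (x - t) :=
    fun x => (hasGradientAt_mollify hvl hhl hvh ρ x).gradient
  have hzero : ∀ x, x ∉ cthickening η₀ K → x ∉ K := fun x hx hxK =>
    hx (self_subset_cthickening K hxK)
  have hsupp : tsupport (fun x => ∫ t, ρ.normed volume t • v (x - t)) ⊆ cthickening η₀ K := by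
    refine closure_minimal (fun x hx => ?_) isClosed_cthickening
    by_contra hxK
    exact hx (mollify_eq_zero hv0 (hρ.trans hη.2.le) hxK)
  refine ⟨fun x => ∫ t, ρ.normed volume t • v (x - t), ⟨?_, ?_, hsupp.trans hsub⟩,
    fun x hx => ?_, fun x hx => ?_, ?_, ?_⟩
  · exact ρ.hasCompactSupport_normed.contDiff_convolution_left (ContinuousLinearMap.lsmul ℝ ℝ)
      ρ.contDiff_normed hvl
  · exact hK'.of_isClosed_subset (isClosed_tsupport _) hsupp
  · beta_reduce
    rw [hv0 x (hzero x hx), mollify_eq_zero hv0 (hρ.trans hη.2.le) hx, sub_zero]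
  · rw [hgrad, hh0 x (hzero x hx), mollify_eq_zero hh0 (hρ.trans hη.2.le) hx, sub_zero]
  · rw [← Pi.sub_def, eLpNorm_sub_comm]
    exact hηv ρ hρ
  · simp only [hgrad]
    rw [← Pi.sub_def, eLpNorm_sub_comm]
    exact hηh ρ hρ

theorem memLp_of_norm_le_mul {F' : Type*} [NormedAddCommGroup F'] {q : ℝ≥0∞} {f : Euc n → F}
    {k : Euc n → F'} {C : ℝ} (hf : AEStronglyMeasurable f volume) (hK : MeasurableSet K)
    (h0 : ∀ x, x ∉ K → f x = 0) (hle : ∀ x ∈ K, ‖f x‖ ≤ C * ‖k x‖)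
    (hk : eLpNorm k q (volume.restrict K) < ⊤) : MemLp f q volume := by
  refine ⟨hf, ?_⟩
  rw [← eLpNorm_restrict_eq_of_support_subset fun x hx => by_contra fun h => hx (h0 x h)]
  refine (eLpNorm_le_mul_eLpNorm_of_ae_le_mul (c := C) ?_ q).trans_lt
    (ENNReal.mul_lt_top ENNReal.ofReal_lt_top hk)
  filter_upwards [ae_restrict_mem hK] with x hx using hle x hx

end WeakGradient

section Density

variable {Ω : Set (Euc n)} {c : ℝ} {q : ℝ≥0∞}

theorem one_sub_mul_bd_le {x y : Euc n} (hx : x ∈ ball y (c * bd Ω y)) :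
    (1 - c) * bd Ω y ≤ bd Ω x := by
  have h1 := bd_sub_le Ω y x
  have h2 := mem_ball.1 hx
  rw [dist_comm] at h1
  linarith

theorem avNorm_div_bd_lt_top (hΩ : IsOpen Ω) (hne : (frontier Ω).Nonempty) (hc1 : c < 1)
    (d : ℝ) {p : ℝ} (hp : 1 ≤ p) (s : ℝ) {C : ℝ} (hC : 0 ≤ C) {u : Euc n → ℝ}
    (hu : avNorm Ω d c q (ENNReal.ofReal p) (s + 1) u < ⊤) :
    avNorm Ω d c q (ENNReal.ofReal p) s (fun x => C / bd Ω x * u x) < ⊤ := by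
  have hp0 : 0 < p := by linarith
  have h1c : 0 < 1 - c := by linarith
  rw [avNorm_eq_lintegral hΩ hne d hp, lintegral_avMeasure hΩ hne] at hu ⊢
  refine ENNReal.rpow_lt_top_of_nonneg (by positivity) (ne_of_lt ?_)
  have hu' : ∫⁻ y in Ω, wAvg Ω c q u y ^ p *
      ENNReal.ofReal (bd Ω y) ^ (d - n + p - p * (s + 1)) < ⊤ := by
    rw [lt_top_iff_ne_top]
    intro h
    rw [h, ENNReal.top_rpow_of_pos (by positivity)] at hu
    exact hu.ne rfl
  have hle : ∀ y ∈ Ω, wAvg Ω c q (fun x => C / bd Ω x * u x) y ^ p *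
      ENNReal.ofReal (bd Ω y) ^ (d - n + p - p * s) ≤ ENNReal.ofReal (C / (1 - c)) ^ p *
        (wAvg Ω c q u y ^ p * ENNReal.ofReal (bd Ω y) ^ (d - n + p - p * (s + 1))) := by
    intro y hy
    have hpos := bd_pos hΩ hne hy
    have hw : wAvg Ω c q (fun x => C / bd Ω x * u x) y ≤
        ENNReal.ofReal (C / (1 - c)) * ENNReal.ofReal (bd Ω y) ^ (-1 : ℝ) * wAvg Ω c q u y := by
      rw [ENNReal.ofReal_rpow_of_pos hpos, ← ENNReal.ofReal_mul (by positivity)]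
      refine eLpNorm_le_mul_eLpNorm_of_ae_le_mul (Measure.ae_smul_measure ?_ _) q
      filter_upwards [ae_restrict_mem measurableSet_ball] with x hx
      have hbx := one_sub_mul_bd_le hx
      have hbx0 : 0 < (1 - c) * bd Ω y := by positivity
      have hx0 : 0 < bd Ω x := hbx0.trans_le hbx
      rw [norm_mul, Real.norm_of_nonneg (by positivity)]
      gcongr
      rw [Real.rpow_neg_one, ← div_eq_mul_inv, div_div]
      gcongr
    have hy0 : ENNReal.ofReal (bd Ω y) ≠ 0 := by simpa using hpos
    calc _ ≤ (ENNReal.ofReal (C / (1 - c)) * ENNReal.ofReal (bd Ω y) ^ (-1 : ℝ) *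
            wAvg Ω c q u y) ^ p * ENNReal.ofReal (bd Ω y) ^ (d - n + p - p * s) := by
          gcongr
      _ = ENNReal.ofReal (C / (1 - c)) ^ p * (wAvg Ω c q u y ^ p *
            (ENNReal.ofReal (bd Ω y) ^ (-1 * p) *
              ENNReal.ofReal (bd Ω y) ^ (d - n + p - p * s))) := by
          rw [ENNReal.mul_rpow_of_nonneg _ _ hp0.le, ENNReal.mul_rpow_of_nonneg _ _ hp0.le,
            ← ENNReal.rpow_mul]
          ring
      _ = _ := by
          rw [← ENNReal.rpow_add _ _ hy0 ENNReal.ofReal_ne_top]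
          ring_nf
  refine (setLIntegral_mono' hΩ.measurableSet hle).trans_lt ?_
  rw [lintegral_const_mul' _ _
    (ENNReal.rpow_ne_top_of_nonneg hp0.le ENNReal.ofReal_ne_top)]
  exact ENNReal.mul_lt_top
    (ENNReal.rpow_lt_top_of_nonneg hp0.le ENNReal.ofReal_ne_top) hu'

/-- An exhausting sequence of cutoff functions with gradients controlled by the distance to the
boundary. -/
theorem exists_cutoff_seq (hΩ : IsOpen Ω) (hne : (frontier Ω).Nonempty) (hc1 : c < 1) :
    ∃ χ : ℕ → Euc n → ℝ, (∀ k, IsTestOn Ω (χ k)) ∧ (∀ k x, χ k x ∈ Icc (0 : ℝ) 1) ∧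
      (∀ k, ∀ x ∈ Ω, ‖gradient (χ k) x‖ ≤ 9 / bd Ω x) ∧
      (∀ y ∈ Ω, ∀ᶠ k in atTop, ∀ x ∈ ball y (c * bd Ω y), χ k x = 1) ∧
      ∀ y ∈ Ω, ∀ᶠ k in atTop, ∀ x ∈ ball y (c * bd Ω y), gradient (χ k) x = 0 := by
  have h0 : 0 ≤ bd Ω 0 := infDist_nonneg
  choose χ hs hcs hsub h01 hd hone using fun k : ℕ =>
    exists_contDiff_cutoff hΩ hne (r := 1 / ((k : ℝ) + 1)) (R := (k : ℝ) + 1 + bd Ω 0)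
      (by positivity) (by positivity) (by linarith [(Nat.cast_nonneg k : (0 : ℝ) ≤ k)])
  have hev : ∀ y ∈ Ω, ∀ᶠ k in atTop, ∀ x ∈ ball y (c * bd Ω y), χ k x = 1 := by
    intro y hy
    have hpos : 0 < (1 - c) * bd Ω y := mul_pos (by linarith) (bd_pos hΩ hne hy)
    have ht : Tendsto (fun k : ℕ => 4 * (1 / ((k : ℝ) + 1))) atTop (𝓝 0) := by
      simpa using tendsto_one_div_add_atTop_nhds_zero_nat.const_mul (4 : ℝ)
    filter_upwards [ht.eventually (ge_mem_nhds hpos),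
      tendsto_natCast_atTop_atTop.eventually_ge_atTop (‖y‖ + c * bd Ω y)] with k hk hkR x hx
    refine hone k x (ball_bd_subset hΩ hne hc1 hy hx) (hk.trans (one_sub_mul_bd_le hx)) ?_
    have h1 := (mem_ball_iff_norm.1 hx).le
    have h2 := norm_le_norm_add_norm_sub' x y
    linarith
  refine ⟨χ, fun k => ⟨hs k, hcs k, hsub k⟩, h01, fun k x hx => ?_, hev, fun y hy => ?_⟩
  · rw [norm_gradient]
    exact hd k x hx
  · filter_upwards [hev y hy] with k hk x hx
    have : χ k =ᶠ[𝓝 x] fun _ => 1 :=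
      mem_of_superset (isOpen_ball.mem_nhds hx) fun z hz => hk z hz
    rw [gradient, this.fderiv_eq]
    simp

/-- Density of test functions for the weighted averaged norms; only the nonemptiness of the
boundary is needed. -/
theorem exists_isTestOn_avNorm_sub_lt (hΩ : IsOpen Ω) (hne : (frontier Ω).Nonempty) (hc : 0 < c)
    (hc1 : c < 1) (hq1 : 1 ≤ q) (hq : q ≠ ⊤) {d p s : ℝ} (hp : 1 ≤ p) {u : Euc n → ℝ}
    {g : Euc n → Euc n} (hgrad : HasWeakGradOn u g Ω)
    (hg : avNorm Ω d c q (ENNReal.ofReal p) s g < ⊤)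
    (hu : avNorm Ω d c q (ENNReal.ofReal p) (s + 1) u < ⊤) {ε : ℝ} (hε : 0 < ε) :
    ∃ φ : Euc n → ℝ, IsTestOn Ω φ ∧
      avNorm Ω d c q (ENNReal.ofReal p) s (fun x => g x - gradient φ x) +
        avNorm Ω d c q (ENNReal.ofReal p) (s + 1) (fun x => u x - φ x) < ENNReal.ofReal ε := by
  have hq0 : q ≠ 0 := (zero_lt_one.trans_le hq1).ne'
  have hum : AEStronglyMeasurable u (volume.restrict Ω) := hgrad.1.aestronglyMeasurable
  have hgm : AEStronglyMeasurable g (volume.restrict Ω) := hgrad.2.1.aestronglyMeasurable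
  obtain ⟨χ, hχ, h01, hdχ, hone, hdzero⟩ := exists_cutoff_seq hΩ hne hc1
  have hχc : ∀ k, Continuous (χ k) := fun k => (hχ k).1.continuous
  have hdχc : ∀ k, Continuous (gradient (χ k)) := fun k => continuous_gradient (hχ k).1
  have hχm : ∀ k, AEStronglyMeasurable (fun x => 1 - χ k x) (volume.restrict Ω) := fun k =>
    (continuous_const.sub (hχc k)).aestronglyMeasurable
  have h1χ : ∀ k x, ‖1 - χ k x‖ ≤ 1 := fun k x =>
    abs_le.2 ⟨by linarith [(h01 k x).2], by linarith [(h01 k x).1]⟩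
  have hgt : Tendsto (fun k => avNorm Ω d c q (ENNReal.ofReal p) s
      (fun x => (1 - χ k x) • g x)) atTop (𝓝 0) := by
    refine tendsto_avNorm_zero_of_dominated hΩ hne hc1 hq0 hq d hp s
      (fun k => (hχm k).smul hgm) (Eventually.of_forall fun k x _ => ?_) hg fun y hy => ?_
    · rw [norm_smul]
      exact mul_le_of_le_one_left (norm_nonneg _) (h1χ k x)
    · filter_upwards [hone y hy] with k hk x hx
      simp [hk x hx]
  have hut : Tendsto (fun k => avNorm Ω d c q (ENNReal.ofReal p) (s + 1)
      (fun x => (1 - χ k x) • u x)) atTop (𝓝 0) := by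
    refine tendsto_avNorm_zero_of_dominated hΩ hne hc1 hq0 hq d hp (s + 1)
      (fun k => (hχm k).smul hum) (Eventually.of_forall fun k x _ => ?_) hu fun y hy => ?_
    · rw [norm_smul]
      exact mul_le_of_le_one_left (norm_nonneg _) (h1χ k x)
    · filter_upwards [hone y hy] with k hk x hx
      simp [hk x hx]
  have hdt : Tendsto (fun k => avNorm Ω d c q (ENNReal.ofReal p) s
      (fun x => u x • -gradient (χ k) x)) atTop (𝓝 0) := by
    refine tendsto_avNorm_zero_of_dominated hΩ hne hc1 hq0 hq d hp s
      (fun k => hum.smul (hdχc k).neg.aestronglyMeasurable)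
      (Eventually.of_forall fun k x hx => ?_)
      (avNorm_div_bd_lt_top hΩ hne hc1 d hp s (C := 9) (by norm_num) hu) fun y hy => ?_
    · have := bd_pos hΩ hne hx
      rw [norm_smul, norm_neg, norm_mul, mul_comm, Real.norm_of_nonneg (r := 9 / _) (by positivity)]
      gcongr
      exact hdχ k x hx
    · filter_upwards [hdzero y hy] with k hk x hx
      simp [hk x hx]
  set δ := ENNReal.ofReal (ε / 6) with hδ
  have hδ0 : 0 < δ := ENNReal.ofReal_pos.2 (by positivity)
  obtain ⟨k, ⟨hk1, hk2⟩, hk3⟩ := ((hgt.eventually (ge_mem_nhds hδ0)).and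
    (hut.eventually (ge_mem_nhds hδ0))).and (hdt.eventually (ge_mem_nhds hδ0)) |>.exists
  obtain ⟨hχs, hχcpt, hχΩ⟩ := hχ k
  have hzero : ∀ x, x ∉ tsupport (χ k) → χ k x = 0 := fun x hx =>
    image_eq_zero_of_notMem_tsupport hx
  have hgzero : ∀ x, x ∉ tsupport (χ k) → gradient (χ k) x = 0 := fun x hx =>
    gradient_eq_zero_of_notMem_tsupport hx
  have hKm : MeasurableSet (tsupport (χ k)) := (isClosed_tsupport _).measurableSet
  have huK := eLpNorm_restrict_compact_lt_top hΩ hne hc hc1 hq0 hq hp hum hu hχcpt hχΩ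
  have hgK := eLpNorm_restrict_compact_lt_top hΩ hne hc hc1 hq0 hq hp hgm hg hχcpt hχΩ
  have hχle : ∀ x, ‖χ k x‖ ≤ 1 := fun x =>
    abs_le.2 ⟨by linarith [(h01 k x).1], (h01 k x).2⟩
  obtain ⟨C, hC⟩ := hχcpt.exists_bound_of_continuousOn (hdχc k).continuousOn
  have hv : MemLp (fun x => χ k x * u x) q volume := by
    refine memLp_of_norm_le_mul (C := 1) (integrable_smul_of_locallyIntegrableOn hgrad.1 hχcpt hχΩ
      (hχc k) hzero).aestronglyMeasurable hKm (fun x hx => by simp [hzero x hx]) (fun x _ => ?_) huK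
    rw [norm_mul]
    gcongr
    exact hχle x
  have hh1 : MemLp (fun x => χ k x • g x) q volume := by
    refine memLp_of_norm_le_mul (C := 1) (integrable_smul_of_locallyIntegrableOn hgrad.2.1 hχcpt hχΩ
      (hχc k) hzero).aestronglyMeasurable hKm (fun x hx => by simp [hzero x hx]) (fun x _ => ?_) hgK
    rw [norm_smul]
    gcongr
    exact hχle x
  have hh2 : MemLp (fun x => u x • gradient (χ k) x) q volume := by
    refine memLp_of_norm_le_mul (C := C) ?_ hKm (fun x hx => by simp [hgzero x hx])
      (fun x hx => ?_) huK
    · have hm : AEStronglyMeasurable (fun x => u x • gradient (χ k) x)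
          (volume.restrict (tsupport (χ k))) :=
        (hum.mono_measure (Measure.restrict_mono hχΩ le_rfl)).smul
          (hdχc k).aestronglyMeasurable
      have hind := (aestronglyMeasurable_indicator_iff hKm).2 hm
      rwa [indicator_eq_self.2 fun x hx => by_contra fun h => hx (by simp [hgzero x h])] at hind
    · rw [norm_smul, mul_comm]
      gcongr
      exact hC x hx
  obtain ⟨K', hK', hK'Ω, happrox⟩ := exists_contDiff_approx hq1 hq hΩ hχcpt hχΩ hv (hh1.add hh2)
    (fun x hx => by simp [hzero x hx]) (fun x hx => by simp [hzero x hx, hgzero x hx])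
    fun φ hφ _ w => hgrad.integral_mul_fderiv (hχ k) hφ w
  obtain ⟨C₁, hC₁, hle₁⟩ := exists_avNorm_le_mul_eLpNorm (F := ℝ) hΩ hne hc hc1 hq d hp (s + 1)
    hK' hK'Ω
  obtain ⟨C₂, hC₂, hle₂⟩ := exists_avNorm_le_mul_eLpNorm (F := Euc n) hΩ hne hc hc1 hq d hp s
    hK' hK'Ω
  obtain ⟨φ, hφ, hφ0, hdφ0, hφle, hdφle⟩ := happrox (δ / (C₁ + C₂))
    (ENNReal.div_pos hδ0.ne' (ENNReal.add_ne_top.2 ⟨hC₁, hC₂⟩))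
  have hb₁ : avNorm Ω d c q (ENNReal.ofReal p) (s + 1) (fun x => χ k x * u x - φ x) ≤ δ :=
    (hle₁ _ hφ0).trans ((mul_le_mul' le_self_add hφle).trans ENNReal.mul_div_le)
  have hb₂ : avNorm Ω d c q (ENNReal.ofReal p) s
      (fun x => χ k x • g x + u x • gradient (χ k) x - gradient φ x) ≤ δ :=
    (hle₂ _ hdφ0).trans ((mul_le_mul' le_add_self hdφle).trans ENNReal.mul_div_le)
  have hg1m : AEStronglyMeasurable (fun x => (1 - χ k x) • g x) (volume.restrict Ω) :=
    (hχm k).smul hgm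
  have hg2m : AEStronglyMeasurable (fun x => u x • -gradient (χ k) x) (volume.restrict Ω) :=
    hum.smul (hdχc k).neg.aestronglyMeasurable
  have hg3m : AEStronglyMeasurable
      (fun x => χ k x • g x + u x • gradient (χ k) x - gradient φ x) (volume.restrict Ω) :=
    (hh1.add hh2).1.restrict.sub (continuous_gradient hφ.1).aestronglyMeasurable
  have hfinal₁ : avNorm Ω d c q (ENNReal.ofReal p) s (fun x => g x - gradient φ x) ≤
      δ + δ + δ := by
    have heq : (fun x => g x - gradient φ x) = fun x =>
        ((1 - χ k x) • g x + u x • -gradient (χ k) x) +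
          (χ k x • g x + u x • gradient (χ k) x - gradient φ x) := by
      funext x
      module
    rw [heq]
    exact (avNorm_add_le hΩ hne hc1 hq1 hq d hp s (hg1m.add hg2m) hg3m).trans
      (add_le_add ((avNorm_add_le hΩ hne hc1 hq1 hq d hp s hg1m hg2m).trans
        (add_le_add hk1 hk3)) hb₂)
  have hfinal₂ : avNorm Ω d c q (ENNReal.ofReal p) (s + 1) (fun x => u x - φ x) ≤ δ + δ := by
    have heq : (fun x => u x - φ x) = fun x => (1 - χ k x) • u x + (χ k x * u x - φ x) := by
      funext x
      rw [smul_eq_mul]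
      ring
    rw [heq]
    exact (avNorm_add_le hΩ hne hc1 hq1 hq d hp (s + 1) ((hχm k).smul hum)
      (hv.1.restrict.sub hφ.1.continuous.aestronglyMeasurable)).trans (add_le_add hk2 hb₁)
  refine ⟨φ, hφ, (add_le_add hfinal₁ hfinal₂).trans_lt ?_⟩
  have hε6 : 0 ≤ ε / 6 := by positivity
  rw [hδ, ← ENNReal.ofReal_add hε6 hε6, ← ENNReal.ofReal_add (by positivity) hε6,
    ← ENNReal.ofReal_add (by positivity) (by positivity)]
  exact (ENNReal.ofReal_lt_ofReal_iff hε).2 (by linarith)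

end Density

/-- density of smooth compactly supported functions in
`W̃^{1,p}_{av,c,β,s}(Ω)` for a weak local John domain with unbounded complement. -/
theorem statement_15 (n : ℕ) (d : ℝ) (hd0 : 0 < d) (hdn : d < n)
    (Ω : Set (Euc n)) (hΩ : IsOpen Ω) (A₀ : ℝ) (hahl : AhlforsRegular d A₀ (frontier Ω))
    (hjohn : WeakLocalJohn Ω d) (hunb : ¬ Bornology.IsBounded Ωᶜ)
    (s p β c : ℝ) (hs : 0 < s) (hp : 1 ≤ p) (hβ : 1 ≤ β) (hc : 0 < c) (hc1 : c < 1)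
    (u : Euc n → ℝ) (g : Euc n → Euc n) (hgrad : HasWeakGradOn u g Ω)
    (hg : avNorm Ω d c (ENNReal.ofReal β) (ENNReal.ofReal p) s g < ⊤)
    (hu : avNorm Ω d c (ENNReal.ofReal β) (ENNReal.ofReal p) (s + 1) u < ⊤) :
    ∀ ε : ℝ, 0 < ε → ∃ φ : Euc n → ℝ,
      ContDiff ℝ (⊤ : ℕ∞) φ ∧ HasCompactSupport φ ∧ tsupport φ ⊆ Ω ∧
      avNorm Ω d c (ENNReal.ofReal β) (ENNReal.ofReal p) s
          (fun x => g x - gradient φ x) +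
        avNorm Ω d c (ENNReal.ofReal β) (ENNReal.ofReal p) (s + 1)
          (fun x => u x - φ x) < ENNReal.ofReal ε := by
  intro ε hε
  obtain ⟨φ, ⟨hφs, hφc, hφΩ⟩, hlt⟩ := exists_isTestOn_avNorm_sub_lt hΩ hahl.1 hc hc1
    (ENNReal.one_le_ofReal.2 hβ) ENNReal.ofReal_ne_top hp hgrad hg hu hε
  exact ⟨φ, hφs, hφc, hφΩ, hlt⟩

end Paper
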